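/- Let A be an n×n complex matrix. The similarity class {g·A·g⁻¹ : g invertible} of A is a closed subset of the space of n×n complex matrices (with its standard topology) if and only if A is diagonalizable. (This is the GL_n, σ = id instance of Theorem 1: an element is semisimple if and only if its conjugation orbit is closed.) -/

import Mathlib

/-!
Closed class implies diagonalizable. Over `ℂ` the matrix `A` is similar to a matrix `T` that is
triangular (`exists_triangular_basis`, by induction, splitting off an invariant hyperplane: the
kernel of an eigenvector of the dual map). Conjugating `T` by `diag (t ^ i)` and letting `t → 0`
kills the off-diagonal entries, so the diagonal part of `T` lies in the closure of the similarity
class (`exists_diagonal_mem_closure`).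

Diagonalizable implies closed. Let `A` be similar to `diag d` and let `p = ∏ (X - c)` over the
distinct values `c` of `d`. The conditions `p(B) = 0` and `charpoly B = charpoly A` are closed in
`B` and hold on the similarity class. Conversely, they characterize it: `p` is squarefree, so
`p(B) = 0` makes `B` diagonalizable (`exists_eigenbasis`), and equality of the characteristic
polynomials makes its eigenvalues a permutation of `d`.
-/

open Module Polynomial Filter Topology

/-- Every endomorphism has a basis in which its matrix is lower triangular. -/
theorem exists_triangular_basis (n : ℕ) : ∀ (V : Type) [AddCommGroup V] [Module ℂ V]
    [FiniteDimensional ℂ V] (_ : finrank ℂ V = n) (f : Module.End ℂ V),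
    ∃ b : Basis (Fin n) ℂ V, ∀ i j, i < j → b.repr (f (b j)) i = 0 := by
  induction n with
  | zero =>
    intro V _ _ _ hV f
    exact ⟨finBasisOfFinrankEq ℂ V hV, fun i => i.elim0⟩
  | succ n ih =>
    intro V _ _ _ hV f
    have : Nontrivial (Dual ℂ V) := by
      apply nontrivial_of_finrank_pos (R := ℂ)
      rw [Subspace.dual_finrank_eq, hV]
      exact Nat.succ_pos n
    -- An eigenvector `φ` of the dual map: its kernel is an `f`-invariant hyperplane.
    obtain ⟨μ, hμ⟩ := Module.End.exists_eigenvalue (K := ℂ) (V := Dual ℂ V) f.dualMap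
    obtain ⟨φ, hφ⟩ := hμ.exists_hasEigenvector
    have hf : ∀ v, φ (f v) = μ * φ v := fun v => by
      simpa using LinearMap.congr_fun hφ.apply_eq_smul v
    obtain ⟨y₀, hy₀⟩ : ∃ y, φ y ≠ 0 := by
      by_contra! h
      exact hφ.2 (LinearMap.ext h)
    obtain ⟨y, hy⟩ : ∃ y, φ y = 1 := ⟨(φ y₀)⁻¹ • y₀, by simp [hy₀]⟩
    have hinv : ∀ x ∈ LinearMap.ker φ, f x ∈ LinearMap.ker φ := fun x hx => by
      rw [LinearMap.mem_ker] at hx ⊢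
      rw [hf, hx, mul_zero]
    have hrank : finrank ℂ (LinearMap.ker φ) = n := by
      have h1 := LinearMap.finrank_range_add_finrank_ker φ
      have h2 : LinearMap.range φ = ⊤ :=
        LinearMap.range_eq_top.2 fun c => ⟨c • y, by simp [hy]⟩
      rw [h2, finrank_top, finrank_self, hV] at h1
      omega
    obtain ⟨b, hb⟩ := ih (LinearMap.ker φ) hrank (f.restrict hinv)
    have hli : ∀ c : ℂ, ∀ x ∈ LinearMap.ker φ, c • y + x = 0 → c = 0 := fun c x hx h => by
      simpa [hy, LinearMap.mem_ker.1 hx] using congrArg φ h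
    have hsp : ∀ z : V, ∃ c : ℂ, z + c • y ∈ LinearMap.ker φ := fun z =>
      ⟨-φ z, by simp [hy]⟩
    let B := Basis.mkFinCons y b hli hsp
    have hB : ∀ j, B (Fin.succ j) = b j := fun j => by simp [B]
    -- On the hyperplane, `B`-coordinates are `b`-coordinates preceded by `0`.
    have hrepr : ∀ x : LinearMap.ker φ, ∀ i,
        B.repr (x : V) i = (Fin.cons 0 (b.repr x) : Fin (n + 1) → ℂ) i := by
      intro x i
      have hx : (x : V) = ∑ k, (Fin.cons 0 (b.repr x) : Fin (n + 1) → ℂ) k • B k := by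
        rw [Fin.sum_univ_succ]
        simp only [Fin.cons_zero, zero_smul, zero_add, Fin.cons_succ, hB]
        have := congrArg (LinearMap.ker φ).subtype (b.sum_repr x)
        simpa only [map_sum, map_smul, Submodule.subtype_apply] using this.symm
      conv_lhs => rw [hx]
      rw [B.repr_sum_self]
    refine ⟨B, fun i j hij => ?_⟩
    obtain ⟨j, rfl⟩ := Fin.exists_succ_eq.2 (Fin.ne_zero_of_lt hij)
    have h1 : f (B j.succ) = (f.restrict hinv (b j) : LinearMap.ker φ) := by
      rw [hB]; rfl
    rw [h1, hrepr]
    induction i using Fin.cases with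
    | zero => rfl
    | succ i => exact hb i j (Fin.succ_lt_succ_iff.1 hij)

variable {n : ℕ}

/-- `A` and `B` are similar, written `B = g * A * g⁻¹`; for fixed `A`, the set `{B | Sim A B}` is
the similarity class of `A`. -/
def Sim (A B : Matrix (Fin n) (Fin n) ℂ) : Prop :=
  ∃ g : GL (Fin n) ℂ,
    B = (g : Matrix (Fin n) (Fin n) ℂ) * A * (↑g⁻¹ : Matrix (Fin n) (Fin n) ℂ)

theorem Sim.symm {A B : Matrix (Fin n) (Fin n) ℂ} (h : Sim A B) : Sim B A := by
  obtain ⟨g, rfl⟩ := h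
  exact ⟨g⁻¹, by simp only [inv_inv, mul_assoc, Units.inv_mul_cancel_left, Units.inv_mul,
    mul_one]⟩

theorem Sim.trans {A B C : Matrix (Fin n) (Fin n) ℂ} (h : Sim A B) (h' : Sim B C) :
    Sim A C := by
  obtain ⟨g, rfl⟩ := h
  obtain ⟨k, rfl⟩ := h'
  exact ⟨k * g, by simp only [mul_inv_rev, Units.val_mul, mul_assoc]⟩

/-- Changing the basis of the endomorphism given by `A` yields a similar matrix. -/
theorem sim_toMatrix (A : Matrix (Fin n) (Fin n) ℂ) (b : Basis (Fin n) ℂ (Fin n → ℂ)) :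
    Sim A (LinearMap.toMatrix b b (Matrix.toLin' A)) := by
  let e := Pi.basisFun ℂ (Fin n)
  refine ⟨⟨b.toMatrix e, e.toMatrix b, Basis.toMatrix_mul_toMatrix_flip _ _,
    Basis.toMatrix_mul_toMatrix_flip _ _⟩, ?_⟩
  rw [← basis_toMatrix_mul_linearMap_toMatrix_mul_basis_toMatrix b e b e]
  have : LinearMap.toMatrix e e (Matrix.toLin' A) = A := LinearMap.toMatrix'_toLin' A
  rw [this]
  rfl

theorem sim_diagonal_of_eigenbasis {A : Matrix (Fin n) (Fin n) ℂ} {d : Fin n → ℂ}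
    (b : Basis (Fin n) ℂ (Fin n → ℂ)) (h : ∀ i, Matrix.toLin' A (b i) = d i • b i) :
    Sim A (Matrix.diagonal d) := by
  convert sim_toMatrix A b using 1
  ext i j
  rw [LinearMap.toMatrix_apply, h, Matrix.diagonal_apply]
  by_cases hij : i = j
  · subst hij; simp
  · simp [hij]

theorem exists_diagonal_mem_closure (A : Matrix (Fin n) (Fin n) ℂ) :
    ∃ d : Fin n → ℂ, Matrix.diagonal d ∈ closure {B | Sim A B} := by
  obtain ⟨b, hb⟩ := exists_triangular_basis n (Fin n → ℂ) (by simp) (Matrix.toLin' A)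
  set T := LinearMap.toMatrix b b (Matrix.toLin' A) with hT
  have hT0 : ∀ i j, i < j → T i j = 0 := fun i j hij => by
    rw [hT, LinearMap.toMatrix_apply, hb i j hij]
  -- Conjugating by `diag (t ^ i)` multiplies the `(i, j)` entry of `T` by `t ^ (i - j)`.
  let F : ℂ → Matrix (Fin n) (Fin n) ℂ := fun t => Matrix.of fun i j =>
    t ^ ((i : ℕ) - (j : ℕ)) * T i j
  have hF : Continuous F := by
    refine continuous_matrix fun i j => ?_
    simp only [F, Matrix.of_apply]
    fun_prop
  have hF0 : F 0 = Matrix.diagonal fun i => T i i := by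
    ext i j
    simp only [F, Matrix.of_apply, Matrix.diagonal_apply]
    rcases lt_trichotomy i j with h | h | h
    · simp [hT0 i j h, h.ne]
    · subst h; simp
    · have : (i : ℕ) - (j : ℕ) ≠ 0 := by have := Fin.lt_def.1 h; omega
      simp [h.ne', this]
  refine ⟨fun i => T i i, ?_⟩
  rw [← hF0]
  have hlim : Tendsto F (𝓝[≠] 0) (𝓝 (F 0)) := hF.continuousAt.mono_left nhdsWithin_le_nhds
  refine mem_closure_of_tendsto hlim (eventually_nhdsWithin_of_forall fun t (ht : t ≠ 0) => ?_)
  refine (sim_toMatrix A b).trans ⟨⟨Matrix.diagonal fun i => t ^ (i : ℕ),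
    Matrix.diagonal fun i => (t ^ (i : ℕ))⁻¹, ?_, ?_⟩, ?_⟩
  · simp [Matrix.diagonal_mul_diagonal, ht]
  · simp [Matrix.diagonal_mul_diagonal, ht]
  · change F t = Matrix.diagonal (fun i : Fin n => t ^ (i : ℕ)) * T *
      Matrix.diagonal (fun i : Fin n => (t ^ (i : ℕ))⁻¹)
    ext i j
    rw [Matrix.mul_diagonal, Matrix.diagonal_mul]
    simp only [F, Matrix.of_apply]
    rcases lt_or_ge i j with h | h
    · simp [hT0 i j h]
    · rw [pow_sub₀ t ht (Fin.le_def.1 h)]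
      ring

theorem exists_eigenbasis {f : Module.End ℂ (Fin n → ℂ)} (hf : f.IsSemisimple) :
    ∃ (b : Basis (Fin n) ℂ (Fin n → ℂ)) (d : Fin n → ℂ), ∀ i, f (b i) = d i • b i := by
  -- A basis can be extracted from the spanning set of all eigenvectors.
  obtain ⟨s, hs, hspan, hli⟩ := exists_linearIndependent ℂ {v | ∃ μ : ℂ, f v = μ • v}
  have htop : Submodule.span ℂ {v | ∃ μ : ℂ, f v = μ • v} = ⊤ := by
    rw [eq_top_iff, ← hf.iSup_eigenspace_eq_top]
    exact iSup_le fun μ v hv => Submodule.subset_span ⟨μ, Module.End.mem_eigenspace_iff.1 hv⟩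
  let b := Basis.mk hli (by rw [Subtype.range_coe, hspan, htop])
  let b' := b.reindex (b.indexEquiv (Pi.basisFun ℂ (Fin n)))
  have hb : ∀ i, ∃ μ : ℂ, f (b' i) = μ • b' i := fun i => by
    simp only [b', b, Basis.reindex_apply, Basis.mk_apply]
    exact hs (Subtype.prop _)
  choose d hd using hb
  exact ⟨b', d, hd⟩

/-- Families with equal multisets of values differ by a permutation: the fibres over each value
have the same cardinality, and bijections between them glue. -/
theorem exists_perm_of_map_eq {f g : Fin n → ℂ}
    (h : Finset.univ.val.map f = Finset.univ.val.map g) :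
    ∃ σ : Fin n ≃ Fin n, ∀ i, f (σ i) = g i := by
  classical
  have hc : ∀ c, Nonempty ({i // g i = c} ≃ {i // f i = c}) := fun c => by
    rw [← Fintype.card_eq, Fintype.card_subtype, Fintype.card_subtype]
    have := congrArg (Multiset.count c) h
    rw [Multiset.count_map, Multiset.count_map] at this
    simp only [Finset.card, Finset.filter, eq_comm (b := c)]
    exact this.symm
  let e := fun c => (hc c).some
  refine ⟨(Equiv.sigmaFiberEquiv g).symm.trans
    ((Equiv.sigmaCongrRight e).trans (Equiv.sigmaFiberEquiv f)), fun i => ?_⟩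
  exact (e (g i) ⟨i, rfl⟩).2

theorem aeval_eq_zero_of_sim {A : Matrix (Fin n) (Fin n) ℂ} {p : ℂ[X]} (h : aeval A p = 0)
    {B : Matrix (Fin n) (Fin n) ℂ} (hB : Sim A B) : aeval B p = 0 := by
  obtain ⟨g, rfl⟩ := hB
  have : aeval ((g : Matrix (Fin n) (Fin n) ℂ) * A * (↑g⁻¹ : Matrix (Fin n) (Fin n) ℂ)) p =
      (g : Matrix (Fin n) (Fin n) ℂ) * aeval A p * (↑g⁻¹ : Matrix (Fin n) (Fin n) ℂ) := by
    simp only [aeval_eq_sum_range, Units.conj_pow, Finset.mul_sum, Finset.sum_mul,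
      mul_smul_comm, smul_mul_assoc]
  rw [this, h, mul_zero, zero_mul]

/-- Equality of polynomials over `ℂ` is tested on values, and `det (t - B)` is continuous in `B`. -/
theorem isClosed_setOf_charpoly_eq (q : ℂ[X]) :
    IsClosed {B : Matrix (Fin n) (Fin n) ℂ | B.charpoly = q} := by
  have : {B : Matrix (Fin n) (Fin n) ℂ | B.charpoly = q} =
      ⋂ t : ℂ, {B | (Matrix.scalar (Fin n) t - B).det = q.eval t} := by
    ext B
    simp only [Set.mem_ofPred_eq, Set.mem_iInter, ← Matrix.eval_charpoly]
    exact ⟨fun h t => by rw [h], Polynomial.funext⟩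
  rw [this]
  exact isClosed_iInter fun t =>
    isClosed_eq (continuous_const.sub continuous_id).matrix_det continuous_const

theorem Sim.charpoly_eq {A B : Matrix (Fin n) (Fin n) ℂ} (h : Sim A B) :
    B.charpoly = A.charpoly := by
  obtain ⟨g, rfl⟩ := h
  simp

/-- The class of a diagonalizable `A` is cut out by two closed conditions on `B`: being a root of
`∏ (X - c)` over the distinct eigenvalues, and having the characteristic polynomial of `A`. -/
theorem isClosed_sim {A : Matrix (Fin n) (Fin n) ℂ} {d : Fin n → ℂ}
    (h : Sim A (Matrix.diagonal d)) : IsClosed {B | Sim A B} := by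
  classical
  let p : ℂ[X] := ∏ c ∈ Finset.univ.image d, (X - C c)
  have hp : Squarefree p :=
    (separable_prod_X_sub_C_iff'.2 fun _ _ _ _ h => h).squarefree
  have hpd : aeval (Matrix.diagonal d) p = 0 := by
    have h1 := aeval_algHom_apply (Matrix.diagonalAlgHom (n := Fin n) ℂ (α := ℂ)) d p
    have h2 : aeval d p = 0 := by
      ext i
      have h3 := aeval_algHom_apply (Pi.evalAlgHom ℂ (fun _ : Fin n => ℂ) i) d p
      simp only [Pi.evalAlgHom_apply] at h3
      rw [← h3, Pi.zero_apply, coe_aeval_eq_eval, eval_prod]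
      exact Finset.prod_eq_zero (Finset.mem_image_of_mem d (Finset.mem_univ i)) (by simp)
    rw [h2, map_zero] at h1
    exact h1
  have : {B | Sim A B} = {B | aeval B p = 0} ∩ {B | B.charpoly = A.charpoly} := by
    ext B
    refine ⟨fun hB => ⟨aeval_eq_zero_of_sim hpd (h.symm.trans hB), hB.charpoly_eq⟩, ?_⟩
    rintro ⟨hB : aeval B p = 0, hχ : B.charpoly = A.charpoly⟩
    have hss : Module.End.IsSemisimple (Matrix.toLin' B) := by
      refine Module.End.isSemisimple_of_squarefree_aeval_eq_zero hp ?_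
      have h1 := aeval_algHom_apply (Matrix.toLinAlgEquiv' (R := ℂ) (n := Fin n)) B p
      rw [hB, map_zero] at h1
      exact h1
    obtain ⟨b, d', hb⟩ := exists_eigenbasis hss
    have hd : (∏ i, (X - C (d' i))) = ∏ i, (X - C (d i)) := by
      rw [← Matrix.charpoly_diagonal, ← Matrix.charpoly_diagonal, h.charpoly_eq, ← hχ,
        (sim_diagonal_of_eigenbasis b hb).charpoly_eq]
    have hroots : ∀ e : Fin n → ℂ, (∏ i, (X - C (e i))).roots = Finset.univ.val.map e := by
      intro e
      have := roots_multiset_prod_X_sub_C (Finset.univ.val.map e)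
      rwa [Multiset.map_map] at this
    obtain ⟨σ, hσ⟩ := exists_perm_of_map_eq (f := d') (g := d) (by rw [← hroots, hd, hroots])
    refine h.trans (sim_diagonal_of_eigenbasis (b.reindex σ.symm) fun i => ?_).symm
    simp [hb, hσ, -Matrix.toLin'_apply]
  rw [this]
  exact (isClosed_eq p.continuous_aeval continuous_const).inter (isClosed_setOf_charpoly_eq _)

/-- A complex matrix has closed similarity class (for the standard topology) if and only if
it is diagonalizable: orbits of semisimple elements are exactly the closed conjugation orbits. -/
theorem stmt_8 (n : ℕ) (A : Matrix (Fin n) (Fin n) ℂ) :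
    IsClosed {B : Matrix (Fin n) (Fin n) ℂ | ∃ g : GL (Fin n) ℂ,
        B = (g : Matrix (Fin n) (Fin n) ℂ) * A * (↑g⁻¹ : Matrix (Fin n) (Fin n) ℂ)} ↔
      ∃ d : Fin n → ℂ, ∃ g : GL (Fin n) ℂ,
        Matrix.diagonal d =
          (g : Matrix (Fin n) (Fin n) ℂ) * A * (↑g⁻¹ : Matrix (Fin n) (Fin n) ℂ) := by
  constructor
  · intro h
    obtain ⟨d, hd⟩ := exists_diagonal_mem_closure A
    exact ⟨d, h.closure_subset hd⟩
  · rintro ⟨d, hd⟩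
    exact isClosed_sim hd
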